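/- For φ ∈ ℝ and nonzero real x, y, let A_φ(x,y) = [[1, (e^{iφ}−1)/(x·y), 0], [0, 1, y], [x, 0, 1]] ∈ ℂ^{3×3}, and let P(φ) = sup over nonzero real x, y of σ_max(A_φ(x,y))^{−6}, where σ_max denotes the largest singular value. Then P(π/2) = P(π); i.e., the optimal success probability of the generalised Toffoli gate at phase π/2 equals that at phase π. -/

import Mathlib

open Complex Matrix

/-- The largest singular value of a square complex matrix, i.e. its `ℓ² → ℓ²` operator norm. -/
noncomputable def sigmaMax3 (A : Matrix (Fin 3) (Fin 3) ℂ) : ℝ :=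
  ‖Matrix.toEuclideanCLM (𝕜 := ℂ) (n := Fin 3) A‖

/-- The generalised Toffoli core matrix for phase `φ` and nonzero real parameters `x`, `y`. -/
noncomputable def toffoliCore (φ x y : ℝ) : Matrix (Fin 3) (Fin 3) ℂ :=
  !![1, (Complex.exp (φ * Complex.I) - 1) / ((x : ℂ) * (y : ℂ)), 0;
     0, 1, (y : ℂ);
     (x : ℂ), 0, 1]

/-- The optimal success probability of the generalised Toffoli gate of phase `φ`
within the class of globally rescaled unitary extensions of the core. -/
noncomputable def toffoliP (φ : ℝ) : ℝ :=
  sSup {r : ℝ | ∃ x y : ℝ, x ≠ 0 ∧ y ≠ 0 ∧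
    r = (sigmaMax3 (toffoliCore φ x y)) ^ (-6 : ℤ)}

/-! The core is `1 + B` with `B` a weighted cyclic shift, so `B ^ 3 = (e^{iφ} - 1) • 1`. Let `z` be
the principal cube root of `e^{iφ} - 1`. Testing `1 + B` on a vector of suitably chosen phases and
applying AM-GM to the moduli of the weights gives `‖1 + z‖ ≤ σ_max` for all `x`, `y`. When
`x = y = ‖z‖` the weights have equal modulus, so `B` is normal with spectrum inside the cube roots
of `e^{iφ} - 1`; among these `z` has the largest real part, so `σ_max = ‖1 + z‖`.
Hence `P(φ) = ‖1 + z‖⁻⁶`. With `s = 2^{1/6}`, the root is `s e^{iπ/4}` at `φ = π/2` and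
`s² e^{iπ/3}` at `φ = π`, and both give `‖1 + z‖² = 1 + s² + s⁴`. -/

section PrincipalRoot

lemma norm_one_add_sq (z : ℂ) : ‖1 + z‖ ^ 2 = 1 + 2 * z.re + ‖z‖ ^ 2 := by
  rw [Complex.sq_norm, Complex.sq_norm, Complex.normSq_add]
  simp only [map_one, one_mul, Complex.conj_re]
  ring

lemma norm_one_add_le_norm_one_add {ζ z : ℂ} (hnorm : ‖ζ‖ ≤ ‖z‖) (hre : ζ.re ≤ z.re) :
    ‖1 + ζ‖ ≤ ‖1 + z‖ := by
  rw [← sq_le_sq₀ (norm_nonneg _) (norm_nonneg _), norm_one_add_sq, norm_one_add_sq]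
  gcongr

lemma norm_eq_norm_of_pow_eq_pow {K : Type*} [NormedDivisionRing K] {ζ z : K} {n : ℕ} (hn : n ≠ 0)
    (h : ζ ^ n = z ^ n) : ‖ζ‖ = ‖z‖ := by
  rw [← pow_left_inj₀ (norm_nonneg ζ) (norm_nonneg z) hn, ← norm_pow, h, norm_pow]

lemma re_pow_eq_norm_pow_mul_cos (z : ℂ) (n : ℕ) :
    (z ^ n).re = ‖z‖ ^ n * Real.cos (n * arg z) := by
  have hpolar : z ^ n = (‖z‖ ^ n : ℝ) * Complex.exp ((n * arg z : ℝ) * I) := by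
    conv_lhs => rw [← Complex.norm_mul_exp_arg_mul_I z, mul_pow, ← Complex.exp_nat_mul]
    push_cast
    ring_nf
  rw [hpolar, Complex.re_ofReal_mul, Complex.exp_ofReal_mul_I_re]

lemma re_le_re_of_pow_eq_pow {n : ℕ} (hn : n ≠ 0) {ζ z : ℂ} (hz : |arg z| ≤ Real.pi / n)
    (h : ζ ^ n = z ^ n) : ζ.re ≤ z.re := by
  have hnorm : ‖ζ‖ = ‖z‖ := norm_eq_norm_of_pow_eq_pow hn h
  obtain rfl | hz₀ := eq_or_ne z 0
  · simp_all
  have hcos : Real.cos (n * arg ζ) = Real.cos (n * arg z) := by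
    have hre := congrArg Complex.re h
    rw [re_pow_eq_norm_pow_mul_cos, re_pow_eq_norm_pow_mul_cos, hnorm] at hre
    simpa [hz₀] using hre
  have hn_pos : (0 : ℝ) < n := by positivity
  -- Otherwise `n * arg ζ` and `n * arg z` both lie in `[-π, π]`, where `cos` determines `|·|`.
  have harg : |arg z| ≤ |arg ζ| := by
    by_contra! hlt
    have hmul_lt : |n * arg ζ| < |n * arg z| := by
      simpa [abs_mul, hn_pos] using hlt
    have hmul_le : |n * arg z| ≤ Real.pi := by
      rw [abs_mul, Nat.abs_cast]
      exact (le_div_iff₀' hn_pos).1 hz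
    exact (Real.cos_lt_cos_of_nonneg_of_le_pi (abs_nonneg _) hmul_le hmul_lt).ne'
      (by rw [Real.cos_abs, Real.cos_abs, hcos])
  rw [← Complex.norm_mul_cos_arg ζ, ← Complex.norm_mul_cos_arg z, hnorm, ← Real.cos_abs (arg ζ),
    ← Real.cos_abs (arg z)]
  gcongr
  exact Real.cos_le_cos_of_nonneg_of_le_pi (abs_nonneg _) (Complex.abs_arg_le_pi ζ) harg

lemma norm_one_add_le_of_pow_eq_algebraMap {A : Type*} [CStarAlgebra A] {b : A} [IsStarNormal b]
    {n : ℕ} (hn : n ≠ 0) {z : ℂ} (hz : |arg z| ≤ Real.pi / n)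
    (hb : b ^ n = algebraMap ℂ A (z ^ n)) : ‖1 + b‖ ≤ ‖1 + z‖ := by
  nontriviality A
  have hcfc : cfc (fun ζ : ℂ => 1 + ζ) b = 1 + b := by
    rw [cfc_const_add (1 : ℂ) (fun ζ => ζ) b, cfc_id' ℂ b, map_one]
  rw [← hcfc]
  refine norm_cfc_le (norm_nonneg _) fun ζ hζ => ?_
  have hpow : ζ ^ n = z ^ n := by
    have hmem := spectrum.pow_mem_pow b n hζ
    rwa [hb, spectrum.scalar_eq, Set.mem_singleton_iff] at hmem
  exact norm_one_add_le_norm_one_add (norm_eq_norm_of_pow_eq_pow hn hpow).le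
    (re_le_re_of_pow_eq_pow hn hz hpow)

end PrincipalRoot

lemma three_mul_le_add_add_of_mul_eq_pow_three {a b c r : ℝ} (ha : 0 ≤ a) (hb : 0 ≤ b) (hc : 0 ≤ c)
    (h : a * b * c = r ^ 3) : 3 * r ≤ a + b + c := by
  have hr : 0 ≤ r := (show Odd 3 by decide).pow_nonneg_iff.1 (h ▸ by positivity)
  have hamgm := Real.geom_mean_le_arith_mean3_weighted (w₁ := 1 / 3) (w₂ := 1 / 3) (w₃ := 1 / 3)
    (by norm_num) (by norm_num) (by norm_num) ha hb hc (by norm_num)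
  have hroot : a ^ (1 / 3 : ℝ) * b ^ (1 / 3 : ℝ) * c ^ (1 / 3 : ℝ) = r := by
    rw [← Real.mul_rpow ha hb, ← Real.mul_rpow (mul_nonneg ha hb) hc, h, ← Real.rpow_natCast,
      ← Real.rpow_mul hr]
    norm_num
  linarith

section WeightedShift

open scoped Matrix.Norms.L2Operator

lemma norm_star_dotProduct_mulVec_le {n 𝕜 : Type*} [Fintype n] [DecidableEq n] [RCLike 𝕜]
    (A : Matrix n n 𝕜) (v : n → 𝕜) :
    ‖star v ⬝ᵥ A *ᵥ v‖ ≤ ‖A‖ * ‖WithLp.toLp 2 v‖ ^ 2 := by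
  have hinner : star v ⬝ᵥ A *ᵥ v = inner 𝕜 (WithLp.toLp 2 v) (WithLp.toLp 2 (A *ᵥ v)) := by
    rw [EuclideanSpace.inner_toLp_toLp, dotProduct_comm]
  calc ‖star v ⬝ᵥ A *ᵥ v‖ ≤ ‖WithLp.toLp 2 v‖ * ‖WithLp.toLp 2 (A *ᵥ v)‖ := by
        rw [hinner]; exact norm_inner_le_norm _ _
    _ ≤ ‖WithLp.toLp 2 v‖ * (‖A‖ * ‖WithLp.toLp 2 v‖) := by
        gcongr; exact A.l2_opNorm_mulVec (WithLp.toLp 2 v)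
    _ = ‖A‖ * ‖WithLp.toLp 2 v‖ ^ 2 := by ring

/-- The weighted cyclic shift `e₁ ↦ a e₀`, `e₂ ↦ b e₁`, `e₀ ↦ c e₂`, which is the off-diagonal part
of the Toffoli core. -/
def weightedShift {R : Type*} [Zero R] (a b c : R) : Matrix (Fin 3) (Fin 3) R :=
  !![0, a, 0; 0, 0, b; c, 0, 0]

lemma weightedShift_pow_three {R : Type*} [CommSemiring R] (a b c : R) :
    weightedShift a b c ^ 3 = algebraMap R _ (a * b * c) := by
  ext i j
  fin_cases i <;> fin_cases j <;>
    simp [weightedShift, pow_succ, Matrix.algebraMap_matrix_apply, mul_comm, mul_left_comm]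

variable {a b c z : ℂ}

lemma isStarNormal_weightedShift (hab : ‖a‖ = ‖b‖) (hbc : ‖b‖ = ‖c‖) :
    IsStarNormal (weightedShift a b c) := by
  refine ⟨?_⟩
  ext i j
  fin_cases i <;> fin_cases j <;>
    simp [weightedShift, Matrix.mul_apply, Matrix.star_eq_conjTranspose, Fin.sum_univ_three,
      Complex.conj_mul', Complex.mul_conj', hab, hbc]

/-- The phases of the test vector are chosen to align the three terms of the quadratic form. -/
lemma exists_unimodular_star_dotProduct_weightedShift_mulVec (hz : z ≠ 0) (h : a * b * c = z ^ 3) :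
    ∃ v : Fin 3 → ℂ, (∀ i, ‖v i‖ = 1) ∧
      star v ⬝ᵥ weightedShift a b c *ᵥ v = (‖a‖ + ‖b‖ + ‖c‖) / ‖z‖ * z := by
  have hz' : (‖z‖ : ℂ) ≠ 0 := by exact_mod_cast norm_ne_zero_iff.2 hz
  have habc : a * b * c ≠ 0 := h ▸ pow_ne_zero 3 hz
  have hc : c ≠ 0 := right_ne_zero_of_mul habc
  have hb : b ≠ 0 := right_ne_zero_of_mul (left_ne_zero_of_mul habc)
  have hnorm : (‖a‖ * ‖b‖ * ‖c‖ : ℂ) = ‖z‖ ^ 3 := by exact_mod_cast by simpa using congrArg norm h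
  have hb' : (‖b‖ : ℂ) ≠ 0 := by exact_mod_cast norm_ne_zero_iff.2 hb
  have hc' : (‖c‖ : ℂ) ≠ 0 := by exact_mod_cast norm_ne_zero_iff.2 hc
  set v₂ : ℂ := c / ‖c‖ * (‖z‖ / z) with hv₂
  set v₁ : ℂ := b / ‖b‖ * (‖z‖ / z) * v₂ with hv₁
  have hn₂ : ‖v₂‖ = 1 := by simp [hv₂, hc, hz]
  have hn₁ : ‖v₁‖ = 1 := by simp [hv₁, hb, hz, hn₂]
  have hv₂₀ : v₂ ≠ 0 := norm_ne_zero_iff.1 (hn₂ ▸ one_ne_zero)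
  refine ⟨![1, v₁, v₂], by simp [Fin.forall_fin_succ, hn₁, hn₂], ?_⟩
  have ht₀ : a * v₁ = ‖a‖ / ‖z‖ * z := by
    rw [hv₁, hv₂]
    field_simp
    linear_combination ‖z‖ ^ 3 * h - z ^ 3 * hnorm
  have ht₁ : star v₁ * (b * v₂) = ‖b‖ / ‖z‖ * z := by
    rw [Complex.star_def, ← Complex.inv_eq_conj hn₁, hv₁]
    field_simp
  have ht₂ : star v₂ * c = ‖c‖ / ‖z‖ * z := by
    rw [Complex.star_def, ← Complex.inv_eq_conj hn₂, hv₂]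
    field_simp
  calc star ![1, v₁, v₂] ⬝ᵥ weightedShift a b c *ᵥ ![1, v₁, v₂]
      = a * v₁ + star v₁ * (b * v₂) + star v₂ * c := by
        simp [weightedShift, Matrix.mulVec, dotProduct, Fin.sum_univ_three]
    _ = (‖a‖ + ‖b‖ + ‖c‖) / ‖z‖ * z := by rw [ht₀, ht₁, ht₂]; ring

lemma norm_one_add_le_norm_one_add_weightedShift (hz : z ≠ 0) (hre : 0 ≤ z.re)
    (h : a * b * c = z ^ 3) : ‖1 + z‖ ≤ ‖1 + weightedShift a b c‖ := by
  obtain ⟨v, hv, hquad⟩ := exists_unimodular_star_dotProduct_weightedShift_mulVec hz h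
  have hz' : 0 < ‖z‖ := norm_pos_iff.2 hz
  have hvsq : ‖WithLp.toLp 2 v‖ ^ 2 = 3 := by
    simp [EuclideanSpace.norm_sq_eq, hv]
  have hvv : star v ⬝ᵥ v = 3 := by
    simp [dotProduct, Complex.conj_mul', hv]
  set t : ℝ := (‖a‖ + ‖b‖ + ‖c‖) / (3 * ‖z‖) with ht
  have ht₁ : 1 ≤ t := by
    rw [ht, one_le_div (by positivity)]
    exact three_mul_le_add_add_of_mul_eq_pow_three (norm_nonneg a) (norm_nonneg b) (norm_nonneg c)
      (by simpa using congrArg norm h)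
  have hform : star v ⬝ᵥ (1 + weightedShift a b c) *ᵥ v = 3 * (1 + t * z) := by
    rw [add_mulVec, one_mulVec, dotProduct_add, hvv, hquad, ht]
    push_cast; field_simp
  have hmono : ‖1 + z‖ ≤ ‖1 + t * z‖ := by
    apply norm_one_add_le_norm_one_add
    · rw [norm_mul, Complex.norm_real, Real.norm_of_nonneg (by linarith)]
      exact le_mul_of_one_le_left hz'.le ht₁
    · rw [Complex.re_ofReal_mul]
      exact le_mul_of_one_le_left hre ht₁
  have hbound := norm_star_dotProduct_mulVec_le (1 + weightedShift a b c) v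
  rw [hform, hvsq, norm_mul, Complex.norm_ofNat] at hbound
  linarith

lemma norm_one_add_weightedShift_le (hab : ‖a‖ = ‖b‖) (hbc : ‖b‖ = ‖c‖)
    (hz : |arg z| ≤ Real.pi / 3) (h : a * b * c = z ^ 3) :
    ‖1 + weightedShift a b c‖ ≤ ‖1 + z‖ := by
  have := isStarNormal_weightedShift hab hbc
  exact norm_one_add_le_of_pow_eq_algebraMap three_ne_zero (mod_cast hz)
    (by rw [weightedShift_pow_three, h])

end WeightedShift

section Toffoli

open scoped Matrix.Norms.L2Operator

lemma sigmaMax3_toffoliCore (φ x y : ℝ) :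
    sigmaMax3 (toffoliCore φ x y) =
      ‖1 + weightedShift ((Complex.exp (φ * I) - 1) / (x * y)) (y : ℂ) x‖ := by
  have hcore : toffoliCore φ x y =
      1 + weightedShift ((Complex.exp (φ * I) - 1) / (x * y)) (y : ℂ) x := by
    ext i j
    fin_cases i <;> fin_cases j <;> simp [toffoliCore, weightedShift]
  rw [sigmaMax3, hcore, Matrix.l2_opNorm_toEuclideanCLM]

lemma toffoliP_eq_norm_one_add_zpow {φ : ℝ} {z : ℂ} (hz : z ≠ 0) (harg : |arg z| ≤ Real.pi / 3)
    (hφ : Complex.exp (φ * I) - 1 = z ^ 3) : toffoliP φ = ‖1 + z‖ ^ (-6 : ℤ) := by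
  have hre : 0 ≤ z.re := Complex.abs_arg_le_pi_div_two_iff.1 (by linarith [Real.pi_pos])
  have hlower {x y : ℝ} (hx : x ≠ 0) (hy : y ≠ 0) :
      ‖1 + z‖ ≤ sigmaMax3 (toffoliCore φ x y) := by
    rw [sigmaMax3_toffoliCore, hφ]
    have hx' : (x : ℂ) ≠ 0 := by exact_mod_cast hx
    have hy' : (y : ℂ) ≠ 0 := by exact_mod_cast hy
    exact norm_one_add_le_norm_one_add_weightedShift hz hre (by field_simp)
  have hz' : ‖z‖ ≠ 0 := norm_ne_zero_iff.2 hz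
  have hupper : sigmaMax3 (toffoliCore φ ‖z‖ ‖z‖) ≤ ‖1 + z‖ := by
    rw [sigmaMax3_toffoliCore, hφ]
    have hz'' : (‖z‖ : ℂ) ≠ 0 := by exact_mod_cast hz'
    have hweight : ‖z ^ 3 / (‖z‖ * ‖z‖ : ℂ)‖ = ‖(‖z‖ : ℂ)‖ := by
      simp only [norm_div, norm_mul, norm_pow, Complex.norm_real, norm_norm]
      field_simp
    exact norm_one_add_weightedShift_le hweight rfl harg (by field_simp)
  have hpos : 0 < ‖1 + z‖ := norm_pos_iff.2 fun h => by
    have := congrArg Complex.re h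
    simp only [Complex.add_re, Complex.one_re, Complex.zero_re] at this
    linarith
  refine IsGreatest.csSup_eq ⟨⟨‖z‖, ‖z‖, hz', hz', ?_⟩, ?_⟩
  · rw [le_antisymm hupper (hlower hz' hz')]
  · rintro _ ⟨x, y, hx, hy, rfl⟩
    rw [_root_.zpow_neg, _root_.zpow_neg]
    exact inv_anti₀ (by positivity) (zpow_le_zpow_left₀ (by norm_num) hpos.le (hlower hx hy))

lemma exp_mul_I_sub_one (φ : ℂ) :
    Complex.exp (φ * I) - 1 =
      2 * Complex.sin (φ / 2) * Complex.exp ((φ + Real.pi) / 2 * I) := by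
  have hhalf : Complex.exp ((φ + Real.pi) / 2 * I) = Complex.exp (φ / 2 * I) * I := by
    rw [show (φ + Real.pi) / 2 * I = φ / 2 * I + Real.pi / 2 * I by ring, Complex.exp_add,
      Complex.exp_pi_div_two_mul_I]
  have hneg : Complex.exp (-(φ / 2) * I) * Complex.exp (φ / 2 * I) = 1 := by
    rw [← Complex.exp_add, neg_mul, neg_add_cancel, Complex.exp_zero]
  have hsq : Complex.exp (φ * I) = Complex.exp (φ / 2 * I) ^ 2 := by
    rw [← Complex.exp_nat_mul]
    ring_nf
  rw [hhalf, hsq, Complex.sin]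
  linear_combination hneg + Complex.exp (φ / 2 * I) *
    (Complex.exp (φ / 2 * I) - Complex.exp (-(φ / 2) * I)) * Complex.I_sq

/-- The cube root used here is `ρ e^{i(φ + π)/6}`; it is principal exactly because `φ ≤ π`. -/
lemma toffoliP_eq_of_mem_Ioc {φ ρ : ℝ} (hφ : φ ∈ Set.Ioc 0 Real.pi)
    (hρ : ρ ^ 3 = 2 * Real.sin (φ / 2)) :
    toffoliP φ = ((1 + 2 * ρ * Real.cos ((φ + Real.pi) / 6) + ρ ^ 2) ^ 3)⁻¹ := by
  obtain ⟨hφ₀, hφπ⟩ := hφ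
  have hρ₀ : 0 < ρ := by
    have hsin : 0 < Real.sin (φ / 2) := Real.sin_pos_of_pos_of_lt_pi (by linarith) (by linarith)
    exact (show Odd 3 by decide).pow_pos_iff.1 (by linarith)
  set θ : ℝ := (φ + Real.pi) / 6 with hθ
  set z : ℂ := ρ * Complex.exp (θ * I) with hz
  have hnorm : ‖z‖ = ρ := by
    rw [hz, norm_mul, Complex.norm_exp_ofReal_mul_I, Complex.norm_of_nonneg hρ₀.le, mul_one]
  have hre : z.re = ρ * Real.cos θ := by
    rw [hz, Complex.re_ofReal_mul, Complex.exp_ofReal_mul_I_re]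
  have harg : arg z = θ := by
    rw [hz, Complex.exp_mul_I, Complex.arg_mul_cos_add_sin_mul_I hρ₀]
    constructor <;> linarith
  have hcube : Complex.exp (φ * I) - 1 = z ^ 3 := by
    have hρ' : (ρ : ℂ) ^ 3 = 2 * Complex.sin (φ / 2) := by
      exact_mod_cast congrArg Complex.ofReal hρ
    rw [exp_mul_I_sub_one, hz, mul_pow, hρ', ← Complex.exp_nat_mul, hθ]
    push_cast
    ring_nf
  have hz₀ : z ≠ 0 := norm_pos_iff.1 (hnorm ▸ hρ₀)
  have harg_le : |arg z| ≤ Real.pi / 3 := by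
    rw [harg, abs_of_nonneg] <;> linarith
  rw [toffoliP_eq_norm_one_add_zpow hz₀ harg_le hcube, _root_.zpow_neg,
    show ‖1 + z‖ ^ (6 : ℤ) = (‖1 + z‖ ^ 2) ^ 3 by rw [← pow_mul]; norm_cast,
    norm_one_add_sq, hnorm, hre, mul_assoc 2 ρ]

end Toffoli

theorem stmt_16 : toffoliP (Real.pi / 2) = toffoliP Real.pi := by
  have hπ := Real.pi_pos
  obtain ⟨s, hs, hs6⟩ : ∃ s : ℝ, 0 ≤ s ∧ s ^ 6 = 2 :=
    ⟨2 ^ ((6 : ℕ) : ℝ)⁻¹, by positivity, Real.rpow_inv_natCast_pow two_pos.le (by norm_num)⟩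
  have hs3 : s ^ 3 = √2 := by
    rw [eq_comm, Real.sqrt_eq_iff_eq_sq two_pos.le (by positivity), ← pow_mul, hs6]
  have hhalf : toffoliP (Real.pi / 2) = ((1 + 2 * s * (s ^ 3 / 2) + s ^ 2) ^ 3)⁻¹ := by
    have hsin : s ^ 3 = 2 * Real.sin (Real.pi / 2 / 2) := by
      rw [div_div, show (2 * 2 : ℝ) = 4 by norm_num, Real.sin_pi_div_four, hs3]
      ring
    rw [toffoliP_eq_of_mem_Ioc ⟨by linarith, by linarith⟩ hsin,
      show (Real.pi / 2 + Real.pi) / 6 = Real.pi / 4 by ring, Real.cos_pi_div_four, hs3]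
  have hfull : toffoliP Real.pi = ((1 + 2 * s ^ 2 * (1 / 2) + (s ^ 2) ^ 2) ^ 3)⁻¹ := by
    have hsin : (s ^ 2) ^ 3 = 2 * Real.sin (Real.pi / 2) := by
      rw [← pow_mul, hs6, Real.sin_pi_div_two, mul_one]
    rw [toffoliP_eq_of_mem_Ioc ⟨hπ, le_rfl⟩ hsin,
      show (Real.pi + Real.pi) / 6 = Real.pi / 3 by ring, Real.cos_pi_div_three]
  rw [hhalf, hfull]
  ring
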